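/- arXiv:2211.01661 — 6 statements merged into one kernel-verified Lean document; each statement's English description precedes it below -/
import Mathlib

section
/- For every even integer n ≥ 4, the space Ω_n of n×n real symmetric hollow matrices is spanned by the pairing matrices together with the first n−1 adjacent set matrices: every C ∈ Ω_n can be written as a linear combination of matrices from 𝕊(n) ∪ {R_1, …, R_{n−1}}; i.e., span{S : S ∈ 𝕊(n)} + span{R_i : 1 ≤ i ≤ n−1} = Ω_n. -/
open Finset

def hollowSym {n : ℕ} (C : Matrix (Fin n) (Fin n) ℝ) : Prop :=
  C.IsSymm ∧ ∀ i, C i i = 0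

noncomputable def innerH {n : ℕ} (X C : Matrix (Fin n) (Fin n) ℝ) : ℝ :=
  (1 / 2) * ∑ i, ∑ j, X i j * C i j

noncomputable def adjR {n : ℕ} (i : Fin n) : Matrix (Fin n) (Fin n) ℝ :=
  Matrix.of fun k l => if k ≠ l ∧ (i = k ∨ i = l) then 1 else 0

def IsPairing {n : ℕ} (S : Matrix (Fin n) (Fin n) ℝ) : Prop :=
  S.IsSymm ∧ (∀ i, S i i = 0) ∧ (∀ i j, S i j = 0 ∨ S i j = 1) ∧ (∀ i, ∑ j, S i j = 1)

noncomputable def pairings (n : ℕ) : Finset (Matrix (Fin n) (Fin n) ℝ) :=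
  (Finset.univ.filter (fun σ : Equiv.Perm (Fin n) => ∀ i, σ i ≠ i ∧ σ (σ i) = i)).image
    (fun σ => Matrix.of fun i j => if σ i = j then (1 : ℝ) else 0)

noncomputable def pairSum {n : ℕ} (C : Matrix (Fin n) (Fin n) ℝ) : ℝ :=
  ∑ i, ∑ j ∈ Finset.univ.filter (fun j => i < j), C i j

noncomputable def muEl {n : ℕ} (C : Matrix (Fin n) (Fin n) ℝ) : ℝ :=
  (2 / ((n : ℝ) * ((n : ℝ) - 1))) * pairSum C

noncomputable def Jmat (n : ℕ) : Matrix (Fin n) (Fin n) ℝ := Matrix.of fun _ _ => 1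

noncomputable def muSum (n : ℕ) (C : Matrix (Fin n) (Fin n) ℝ) : ℝ :=
  (1 / (Nat.doubleFactorial (n - 1) : ℝ)) * ∑ S ∈ pairings n, innerH S C

noncomputable def sig2El {n : ℕ} (C : Matrix (Fin n) (Fin n) ℝ) : ℝ :=
  (2 / ((n : ℝ) * ((n : ℝ) - 1))) *
    ∑ i, ∑ j ∈ Finset.univ.filter (fun j => i < j), (C i j - muEl C) ^ 2

noncomputable def sig2Sum (n : ℕ) (C : Matrix (Fin n) (Fin n) ℝ) : ℝ :=
  (1 / (Nat.doubleFactorial (n - 1) : ℝ)) *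
    ∑ S ∈ pairings n, (innerH S C - muSum n C) ^ 2

def Omega (n : ℕ) : Submodule ℝ (Matrix (Fin n) (Fin n) ℝ) where
  carrier := {C | C.IsSymm ∧ ∀ i, C i i = 0}
  add_mem' := by
    rintro A B ⟨hA1, hA2⟩ ⟨hB1, hB2⟩
    refine ⟨?_, fun i => ?_⟩
    · unfold Matrix.IsSymm at *
      rw [Matrix.transpose_add, hA1, hB1]
    · simp [Matrix.add_apply, hA2 i, hB2 i]
  zero_mem' := by
    refine ⟨?_, fun i => rfl⟩
    unfold Matrix.IsSymm
    exact Matrix.transpose_zero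
  smul_mem' := by
    rintro c A ⟨hA1, hA2⟩
    refine ⟨?_, fun i => ?_⟩
    · unfold Matrix.IsSymm at *
      rw [Matrix.transpose_smul, hA1]
    · simp [Matrix.smul_apply, hA2 i]

/-!
Fix a vertex `v`. Modulo the span of the pairing matrices and of the adjacent set matrices at the
vertices other than `v`, the edge matrices define a weighting `w` of the edges of the complete graph
whose sum over every perfect matching, and over the star of every vertex other than `v`, is zero.
The point is that such a `w` vanishes.

Exchanging two edges `ab`, `cd` of a matching for `ac`, `bd` gives `w ab + w cd = w ac + w bd`.
Hence `w bj - w cj` does not depend on `j ≠ b, c`, and the star sums at `b` and `c` differ by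
`(|V| - 2) (w bd - w cd)`: if they agree, then `w bd = w cd`. For `u ≠ v` take a perfect matching
`σ` with `σ u = v`. Then `w (i, σ i) = w (i, u)` for all `i ≠ u`, so `∑ i, w (i, σ i)` exceeds the
star sum at `u` by exactly `w uv`, and `w uv = 0`. The star sum at `v` therefore vanishes as well,
and `w bd = w vd = 0` for every edge `bd`.
-/

section PairingPerm

variable {V : Type*} {σ : Equiv.Perm V}

/-- A permutation encoding a perfect matching of the complete graph on `V`: a fixed-point-free
involution, sending each vertex to its partner. -/
structure IsPairingPerm (σ : Equiv.Perm V) : Prop where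
  involutive : Function.Involutive σ
  apply_ne (i : V) : σ i ≠ i

theorem IsPairingPerm.conj (hσ : IsPairingPerm σ) (τ : Equiv.Perm V) :
    IsPairingPerm (τ * σ * τ⁻¹) where
  involutive i := by simpa using congrArg τ (hσ.involutive (τ⁻¹ i))
  apply_ne i h := hσ.apply_ne (τ⁻¹ i) (τ.injective (by simpa using h))

theorem IsPairingPerm.exists_apply_eq (hσ : IsPairingPerm σ) {c d : V} (hcd : c ≠ d) :
    ∃ τ, IsPairingPerm τ ∧ τ c = d ∧
      ∀ a, a ≠ c → a ≠ d → σ a ≠ c → σ a ≠ d → τ a = σ a := by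
  classical
  refine ⟨_, hσ.conj (Equiv.swap (σ c) d), ?_, fun a hac had hσac hσad ↦ ?_⟩
  · simp [Equiv.swap_apply_of_ne_of_ne (hσ.apply_ne c).symm hcd]
  · have ha : a ≠ σ c := fun h ↦ hσac (by rw [h, hσ.involutive])
    simp [Equiv.swap_apply_of_ne_of_ne ha had,
      Equiv.swap_apply_of_ne_of_ne (σ.injective.ne hac) hσad]

variable [Fintype V]

theorem exists_isPairingPerm (hV : Even (Fintype.card V)) :
    ∃ σ : Equiv.Perm V, IsPairingPerm σ := by
  obtain ⟨m, hm⟩ := hV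
  let e : V ≃ Fin m ⊕ Fin m := Fintype.equivOfCardEq (by simp [hm])
  refine ⟨e.trans ((Equiv.sumComm _ _).trans e.symm), fun i ↦ by simp, fun i h ↦ ?_⟩
  have hswap : (e i).swap = e i := by simpa [Equiv.symm_apply_eq] using h
  cases hi : e i <;> simp [hi] at hswap

variable {a b c d : V}

theorem exists_isPairingPerm_apply_eq (hV : Even (Fintype.card V)) (hab : a ≠ b) :
    ∃ σ : Equiv.Perm V, IsPairingPerm σ ∧ σ a = b := by
  obtain ⟨σ, hσ⟩ := exists_isPairingPerm hV
  obtain ⟨τ, hτ, hτa, -⟩ := hσ.exists_apply_eq hab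
  exact ⟨τ, hτ, hτa⟩

theorem exists_isPairingPerm_apply_eq_apply_eq (hV : Even (Fintype.card V))
    (h : [a, b, c, d].Nodup) :
    ∃ σ : Equiv.Perm V, IsPairingPerm σ ∧ σ a = b ∧ σ c = d := by
  obtain ⟨⟨hab, hac, had⟩, ⟨hbc, hbd⟩, hcd⟩ :
      (a ≠ b ∧ a ≠ c ∧ a ≠ d) ∧ (b ≠ c ∧ b ≠ d) ∧ c ≠ d := by simpa using h
  obtain ⟨σ, hσ, rfl⟩ := exists_isPairingPerm_apply_eq hV hab
  obtain ⟨τ, hτ, hτc, hτσ⟩ := hσ.exists_apply_eq hcd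
  exact ⟨τ, hτ, hτσ a hac had hbc hbd, hτc⟩

end PairingPerm

section EdgeWeight

variable {V M : Type*} [AddCommGroup M] {w : Sym2 V → M}

/-- The four-point condition on a weighting of the edges of the complete graph on `V`: the
alternating sum of the weights around every 4-cycle `a b d c` vanishes. -/
def FourPointCondition (w : Sym2 V → M) : Prop :=
  ∀ ⦃a b c d : V⦄, [a, b, c, d].Nodup → w s(a, b) + w s(c, d) = w s(a, c) + w s(b, d)

variable [Fintype V]

theorem IsPairingPerm.sum_sub_sum_conj_swap [DecidableEq V] {σ : Equiv.Perm V} {a b c d : V}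
    (hσ : IsPairingPerm σ) (h : [a, b, c, d].Nodup) (hσa : σ a = b) (hσc : σ c = d) :
    ∑ i, w s(i, σ i) - ∑ i, w s(i, (Equiv.swap b c * σ * (Equiv.swap b c)⁻¹) i) =
      2 • (w s(a, b) + w s(c, d) - (w s(a, c) + w s(b, d))) := by
  obtain ⟨⟨hab, hac, had⟩, ⟨hbc, hbd⟩, hcd⟩ :
      (a ≠ b ∧ a ≠ c ∧ a ≠ d) ∧ (b ≠ c ∧ b ≠ d) ∧ c ≠ d := by simpa using h
  have hσb : σ b = a := by rw [← hσa, hσ.involutive]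
  have hσd : σ d = c := by rw [← hσc, hσ.involutive]
  let τ := Equiv.swap b c
  have hτa : τ a = a := Equiv.swap_apply_of_ne_of_ne hab hac
  have hτb : τ b = c := Equiv.swap_apply_left b c
  have hτc : τ c = b := Equiv.swap_apply_right b c
  have hτd : τ d = d := Equiv.swap_apply_of_ne_of_ne hbd.symm hcd.symm
  have hfixed : ∀ i ∉ ({a, b, c, d} : Finset V),
      w s(i, σ i) - w s(τ i, τ (σ i)) = 0 := by
    intro i hi
    simp only [mem_insert, mem_singleton, not_or] at hi
    obtain ⟨hia, hib, hic, hid⟩ := hi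
    have hσib : σ i ≠ b := fun h ↦ hia (σ.injective (h.trans hσa.symm))
    have hσic : σ i ≠ c := fun h ↦ hid (σ.injective (h.trans hσd.symm))
    rw [show τ i = i from Equiv.swap_apply_of_ne_of_ne hib hic,
      show τ (σ i) = σ i from Equiv.swap_apply_of_ne_of_ne hσib hσic, sub_self]
  calc ∑ i, w s(i, σ i) - ∑ i, w s(i, (τ * σ * τ⁻¹) i)
      = ∑ i, (w s(i, σ i) - w s(τ i, τ (σ i))) := by
        rw [← Equiv.sum_comp τ (fun i ↦ w s(i, (τ * σ * τ⁻¹) i)), sum_sub_distrib]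
        simp
    _ = ∑ i ∈ {a, b, c, d}, (w s(i, σ i) - w s(τ i, τ (σ i))) :=
        (sum_subset (subset_univ _) fun i _ ↦ hfixed i).symm
    _ = 2 • (w s(a, b) + w s(c, d) - (w s(a, c) + w s(b, d))) := by
        rw [sum_insert (by simp [*]), sum_insert (by simp [*]), sum_insert (by simp [*]),
          sum_singleton, hσa, hσb, hσc, hσd, hτa, hτb, hτc, hτd, Sym2.eq_swap (a := b) (b := a),
          Sym2.eq_swap (a := c) (b := a), Sym2.eq_swap (a := d) (b := c),
          Sym2.eq_swap (a := d) (b := b)]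
        abel

theorem FourPointCondition.sum_star_sub_sum_star (R : Type*) [Ring R] [Module R M]
    {b c d : V} (hw : FourPointCondition w) (hdiag : ∀ i, w s(i, i) = 0)
    (hbc : b ≠ c) (hdb : d ≠ b) (hdc : d ≠ c) :
    ∑ j, w s(b, j) - ∑ j, w s(c, j) =
      ((Fintype.card V : R) - 2) • (w s(b, d) - w s(c, d)) := by
  classical
  have hterm : ∀ j ∈ ({b, c} : Finset V)ᶜ,
      w s(b, j) - w s(c, j) = w s(b, d) - w s(c, d) := by
    intro j hj
    obtain ⟨hjb, hjc⟩ : j ≠ b ∧ j ≠ c := by simpa using hj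
    obtain rfl | hjd := eq_or_ne j d
    · rfl
    have := hw (a := b) (b := j) (c := d) (d := c) (by simp [*, Ne.symm])
    rw [sub_eq_sub_iff_add_eq_add, Sym2.eq_swap (a := c) (b := d), this,
      Sym2.eq_swap (a := c) (b := j)]
  have hcard : 2 ≤ Fintype.card V := by
    simpa [card_pair hbc] using card_le_univ ({b, c} : Finset V)
  rw [← sum_sub_distrib, ← sum_compl_add_sum {b, c}, sum_congr rfl hterm, sum_pair hbc, hdiag,
    hdiag, Sym2.eq_swap (a := c) (b := b), sum_const, card_compl, card_pair hbc,
    ← Nat.cast_smul_eq_nsmul R, Nat.cast_sub hcard]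
  simp

variable (K : Type*) [Field K] [Module K M] {b c d u v : V}

theorem fourPointCondition_of_sum_pairing_eq_zero (hK : (2 : K) ≠ 0)
    (hV : Even (Fintype.card V))
    (hpair : ∀ σ : Equiv.Perm V, IsPairingPerm σ → ∑ i, w s(i, σ i) = 0) :
    FourPointCondition w := by
  classical
  intro a b c d h
  obtain ⟨σ, hσ, hσa, hσc⟩ := exists_isPairingPerm_apply_eq_apply_eq hV h
  have hsum := hσ.sum_sub_sum_conj_swap (w := w) h hσa hσc
  rw [hpair σ hσ, hpair _ (hσ.conj _), sub_zero, ← Nat.cast_smul_eq_nsmul K, Nat.cast_ofNat,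
    eq_comm, smul_eq_zero] at hsum
  exact sub_eq_zero.mp (hsum.resolve_left hK)

theorem FourPointCondition.eq_of_sum_star_eq (hK : (Fintype.card V : K) ≠ 2)
    (hw : FourPointCondition w) (hdiag : ∀ i, w s(i, i) = 0)
    (hstar : ∑ j, w s(b, j) = ∑ j, w s(c, j)) (hdb : d ≠ b) (hdc : d ≠ c) :
    w s(b, d) = w s(c, d) := by
  obtain rfl | hbc := eq_or_ne b c
  · rfl
  have h := hw.sum_star_sub_sum_star K hdiag hbc hdb hdc
  rw [hstar, sub_self, eq_comm, smul_eq_zero] at h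
  exact sub_eq_zero.mp (h.resolve_left (sub_ne_zero.mpr hK))

theorem FourPointCondition.apply_excluded_eq_zero (hK : (Fintype.card V : K) ≠ 2)
    (hV : Even (Fintype.card V)) (hw : FourPointCondition w) (hdiag : ∀ i, w s(i, i) = 0)
    (hpair : ∀ σ : Equiv.Perm V, IsPairingPerm σ → ∑ i, w s(i, σ i) = 0)
    (hstar : ∀ i, i ≠ v → ∑ j, w s(i, j) = 0) (huv : u ≠ v) : w s(u, v) = 0 := by
  obtain ⟨σ, hσ, hσu⟩ := exists_isPairingPerm_apply_eq hV huv
  have hterm (i : V) (hi : i ≠ u) : w s(i, σ i) - w s(u, i) = 0 := by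
    rw [sub_eq_zero, Sym2.eq_swap]
    have hσiv : σ i ≠ v := fun h ↦ hi (σ.injective (h.trans hσu.symm))
    exact hw.eq_of_sum_star_eq K hK hdiag ((hstar _ hσiv).trans (hstar u huv).symm)
      (hσ.apply_ne i).symm hi
  calc w s(u, v) = ∑ i, (w s(i, σ i) - w s(u, i)) := by
        rw [sum_eq_single u (fun i _ ↦ hterm i) (by simp), hσu, hdiag, sub_zero]
    _ = 0 := by rw [sum_sub_distrib, hpair σ hσ, hstar u huv, sub_zero]

theorem eq_zero_of_sum_pairing_eq_zero_of_sum_star_eq_zero (hK : (Fintype.card V : K) ≠ 2)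
    (hV : Even (Fintype.card V)) (hdiag : ∀ i, w s(i, i) = 0)
    (hpair : ∀ σ : Equiv.Perm V, IsPairingPerm σ → ∑ i, w s(i, σ i) = 0)
    (hstar : ∀ i, i ≠ v → ∑ j, w s(i, j) = 0) : w = 0 := by
  have htwo : (2 : K) ≠ 0 := by
    obtain ⟨m, hm⟩ := hV
    intro h
    exact hK (by rw [hm, Nat.cast_add, ← two_mul, h, zero_mul])
  have hw := fourPointCondition_of_sum_pairing_eq_zero K htwo hV hpair
  have hv : ∀ u, w s(u, v) = 0 := by
    intro u
    obtain rfl | huv := eq_or_ne u v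
    · exact hdiag u
    · exact hw.apply_excluded_eq_zero K hK hV hdiag hpair hstar huv
  have hstar_v : ∑ j, w s(v, j) = 0 := sum_eq_zero fun j _ ↦ by rw [Sym2.eq_swap, hv]
  ext ⟨b, d⟩
  change w s(b, d) = 0
  obtain rfl | hbv := eq_or_ne b v
  · rw [Sym2.eq_swap, hv]
  obtain rfl | hdv := eq_or_ne d v
  · exact hv b
  obtain rfl | hdb := eq_or_ne d b
  · exact hdiag d
  rw [hw.eq_of_sum_star_eq K hK hdiag ((hstar b hbv).trans hstar_v.symm) hdb hdv, Sym2.eq_swap,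
    hv]

end EdgeWeight

section Matrices

variable {K V : Type*} [Semiring K]

/-- A pairing matrix over an arbitrary semiring. The rows are required to contain exactly one `1`,
which in positive characteristic is stronger than having row sums equal to `1`. -/
structure IsPairingMatrix (S : Matrix V V K) : Prop where
  isSymm : S.IsSymm
  apply_self (i : V) : S i i = 0
  apply_eq_zero_or_one (i j : V) : S i j = 0 ∨ S i j = 1
  existsUnique_apply_eq_one (i : V) : ∃! j, S i j = 1

variable (K V) in
/-- The space of hollow symmetric matrices, generalizing `Omega` to any semiring and index type. -/
def hollowSymmetric : Submodule K (Matrix V V K) where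
  carrier := {C | C.IsSymm ∧ ∀ i, C i i = 0}
  add_mem' hA hB := ⟨hA.1.add hB.1, fun i ↦ by simp [hA.2 i, hB.2 i]⟩
  zero_mem' := ⟨Matrix.isSymm_zero, fun _ ↦ rfl⟩
  smul_mem' c _ hA := ⟨hA.1.smul c, fun i ↦ by simp [hA.2 i]⟩

variable [DecidableEq V]

variable (K) in
/-- The adjacency matrix of the star at `i` in the complete graph on `V`, generalizing `adjR` to
any semiring and index type. -/
def adjacentSetMatrix (i : V) : Matrix V V K :=
  Matrix.of fun k l ↦ if k ≠ l ∧ (i = k ∨ i = l) then 1 else 0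

variable (K) in
/-- The adjacency matrix of the graph on `V` with single edge `e`. It is `0` when `e` is a loop, so
that sums over edges need no side condition. -/
def edgeMatrix (e : Sym2 V) : Matrix V V K :=
  Matrix.of fun k l ↦ if k ≠ l ∧ e = s(k, l) then 1 else 0

theorem edgeMatrix_diag (i : V) : edgeMatrix K s(i, i) = 0 := by
  ext k l
  simp only [edgeMatrix, Matrix.of_apply, Matrix.zero_apply, ite_eq_right_iff]
  rintro ⟨hkl, h⟩
  grind

theorem adjacentSetMatrix_mem_hollowSymmetric (i : V) :
    adjacentSetMatrix K i ∈ hollowSymmetric K V :=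
  ⟨Matrix.IsSymm.ext fun k l ↦ by simp [adjacentSetMatrix, ne_comm, or_comm],
    fun k ↦ by simp [adjacentSetMatrix]⟩

theorem IsPairingPerm.isPairingMatrix [Nontrivial K] {σ : Equiv.Perm V}
    (hσ : IsPairingPerm σ) :
    IsPairingMatrix (σ.permMatrix K) where
  isSymm := by
    have hinv : σ⁻¹ = σ := Equiv.ext fun i ↦ σ.symm_apply_eq.mpr (hσ.involutive i).symm
    rw [Matrix.IsSymm, Matrix.transpose_permMatrix, hinv]
  apply_self i := by simp [PEquiv.toMatrix_apply, hσ.apply_ne i]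
  apply_eq_zero_or_one i j := by simp [PEquiv.toMatrix_apply, em']
  existsUnique_apply_eq_one i := ⟨σ i, by simp [PEquiv.toMatrix_apply],
    fun j hj ↦ by simpa [PEquiv.toMatrix_apply, eq_comm] using hj⟩

variable [Fintype V]

theorem IsPairingPerm.sum_edgeMatrix {σ : Equiv.Perm V} (hσ : IsPairingPerm σ) :
    ∑ i, edgeMatrix K s(i, σ i) = (2 : K) • σ.permMatrix K := by
  ext k l
  have hterm (i : V) : edgeMatrix K s(i, σ i) k l =
      (if i = k then (if σ k = l then 1 else 0) else 0) +
        (if i = l then (if σ k = l then 1 else 0) else 0) := by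
    have hinv := hσ.involutive
    have hne := hσ.apply_ne
    simp only [edgeMatrix, Matrix.of_apply, Sym2.eq_iff]
    grind [Function.Involutive]
  rw [two_smul]
  simp [Matrix.sum_apply, hterm, sum_add_distrib, PEquiv.toMatrix_apply, eq_comm]

theorem sum_edgeMatrix_star (i : V) : ∑ j, edgeMatrix K s(i, j) = adjacentSetMatrix K i := by
  ext k l
  obtain rfl | hkl := eq_or_ne k l
  · simp [Matrix.sum_apply, edgeMatrix, adjacentSetMatrix]
  have hterm (j : V) : edgeMatrix K s(i, j) k l =
      (if j = l then (if i = k then 1 else 0) else 0) +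
        (if j = k then (if i = l then 1 else 0) else 0) := by
    simp only [edgeMatrix, Matrix.of_apply, Sym2.eq_iff]
    grind
  simp only [Matrix.sum_apply, hterm, sum_add_distrib, sum_ite_eq', mem_univ, if_true,
    adjacentSetMatrix, Matrix.of_apply]
  grind

theorem eq_sum_smul_edgeMatrix {C : Matrix V V K} (hC : C.IsSymm) (hdiag : ∀ i, C i i = 0) :
    C = ∑ e, Sym2.lift ⟨fun i j ↦ C i j, fun i j ↦ hC.apply j i⟩ e • edgeMatrix K e := by
  ext k l
  obtain rfl | hkl := eq_or_ne k l
  · simp [Matrix.sum_apply, edgeMatrix, hdiag]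
  · simp [Matrix.sum_apply, edgeMatrix, hkl]

end Matrices

theorem stmt0_general {K V : Type*} [Field K] [Fintype V] [DecidableEq V]
    (hV : Even (Fintype.card V)) (hK : (Fintype.card V : K) ≠ 2) (v : V) :
    Submodule.span K {S : Matrix V V K | IsPairingMatrix S} ⊔
      Submodule.span K (adjacentSetMatrix K '' {v}ᶜ) = hollowSymmetric K V := by
  apply le_antisymm
  · refine sup_le (Submodule.span_le.mpr fun S hS ↦ ⟨hS.isSymm, hS.apply_self⟩)
      (Submodule.span_le.mpr ?_)
    rintro _ ⟨i, -, rfl⟩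
    exact adjacentSetMatrix_mem_hollowSymmetric i
  set W := Submodule.span K {S : Matrix V V K | IsPairingMatrix S} ⊔
    Submodule.span K (adjacentSetMatrix K '' {v}ᶜ)
  let w : Sym2 V → Matrix V V K ⧸ W := fun e ↦ W.mkQ (edgeMatrix K e)
  have hdiag (i : V) : w s(i, i) = 0 := by simp only [w, edgeMatrix_diag, map_zero]
  have hpair (σ : Equiv.Perm V) (hσ : IsPairingPerm σ) : ∑ i, w s(i, σ i) = 0 := by
    rw [← map_sum, hσ.sum_edgeMatrix, Submodule.mkQ_apply, Submodule.Quotient.mk_eq_zero]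
    exact W.smul_mem 2 (Submodule.mem_sup_left (Submodule.subset_span hσ.isPairingMatrix))
  have hstar (i : V) (hi : i ≠ v) : ∑ j, w s(i, j) = 0 := by
    rw [← map_sum, sum_edgeMatrix_star, Submodule.mkQ_apply, Submodule.Quotient.mk_eq_zero]
    exact Submodule.mem_sup_right (Submodule.subset_span ⟨i, hi, rfl⟩)
  have hw : w = 0 :=
    eq_zero_of_sum_pairing_eq_zero_of_sum_star_eq_zero K hK hV hdiag hpair hstar
  have hedge (e : Sym2 V) : edgeMatrix K e ∈ W :=
    (Submodule.Quotient.mk_eq_zero W).mp (congrFun hw e)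
  intro C hC
  rw [eq_sum_smul_edgeMatrix hC.1 hC.2]
  exact W.sum_mem fun e _ ↦ W.smul_mem _ (hedge e)

theorem isPairing_iff_isPairingMatrix {n : ℕ} {S : Matrix (Fin n) (Fin n) ℝ} :
    IsPairing S ↔ IsPairingMatrix S := by
  have hrow (h : ∀ i j, S i j = 0 ∨ S i j = 1) (i : Fin n) :
      ∑ j, S i j = 1 ↔ ∃! j, S i j = 1 := by
    have hite (j : Fin n) : S i j = if S i j = 1 then 1 else 0 := by
      obtain hij | hij := h i j <;> simp [hij]
    rw [sum_congr rfl fun j _ ↦ hite j, sum_boole, Nat.cast_eq_one,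
      Fintype.existsUnique_iff_card_one]
  exact ⟨fun ⟨hS, hdiag, h, hsum⟩ ↦ ⟨hS, hdiag, h, fun i ↦ (hrow h i).mp (hsum i)⟩,
    fun ⟨hS, hdiag, h, hone⟩ ↦ ⟨hS, hdiag, h, fun i ↦ (hrow h i).mpr (hone i)⟩⟩

theorem setOf_val_lt_pred {n : ℕ} (hn : 0 < n) :
    {i : Fin n | (i : ℕ) < n - 1} = {⟨n - 1, Nat.sub_lt hn one_pos⟩}ᶜ := by
  ext i
  simp only [Set.mem_ofPred_eq, Set.mem_compl_iff, Set.mem_singleton_iff, Fin.ext_iff]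
  lia

theorem stmt0 (n : ℕ) (hn : 4 ≤ n) (he : Even n) :
    Submodule.span ℝ {S : Matrix (Fin n) (Fin n) ℝ | IsPairing S} ⊔
      Submodule.span ℝ (adjR '' {i : Fin n | (i : ℕ) < n - 1}) = Omega n := by
  simp only [isPairing_iff_isPairingMatrix, setOf_val_lt_pred (by lia : 0 < n)]
  exact stmt0_general (by simpa using he) (by rw [Fintype.card_fin]; norm_cast; lia) _
end

section
/- For every even integer n ≥ 4, the linear span of the pairing matrices and the linear span of the adjacent set matrices R_1, …, R_{n−1} intersect trivially: span{S : S ∈ 𝕊(n)} ∩ span{R_i : 1 ≤ i ≤ n−1} = {0}, where 0 is the n×n zero matrix. -/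
open Finset

/-!
Choose the omitted index `z` as a reference row and send a matrix to the vector of differences
between its row sums and the sum of row `z`. Pairing matrices have all row sums `1` and are
killed by this linear map, whereas the `i`-th adjacent set matrix, with row sums `n - 1` in row `i`
and `1` elsewhere, goes to `(n - 2) eᵢ` when `i ≠ z`. Since these images are linearly independent
for `n ≠ 2`, the kernel meets the span of the adjacent set matrices trivially.
-/

section RowSums

variable {ι κ R : Type*} [CommRing R]

/-- The differences between the row sums of a matrix and the sum of its reference row `z`, as a
linear map. Its kernel consists of the matrices all of whose row sums are equal. -/
def rowSumDiff [Fintype κ] (z : ι) : Matrix ι κ R →ₗ[R] ι → R where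
  toFun M k := ∑ j, M k j - ∑ j, M z j
  map_add' M N := by
    ext k
    simp only [Matrix.add_apply, sum_add_distrib, Pi.add_apply]
    ring
  map_smul' c M := by
    ext k
    simp only [Matrix.smul_apply, smul_eq_mul, ← mul_sum, Pi.smul_apply, RingHom.id_apply]
    ring

lemma rowSumDiff_apply [Fintype κ] (z : ι) (M : Matrix ι κ R) (k : ι) :
    rowSumDiff z M k = ∑ j, M k j - ∑ j, M z j :=
  rfl

lemma span_constant_row_sum_le_ker_rowSumDiff [Fintype κ] (z : ι) :
    Submodule.span R {M : Matrix ι κ R | ∃ c, ∀ k, ∑ j, M k j = c} ≤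
      LinearMap.ker (rowSumDiff z) := by
  rw [Submodule.span_le]
  rintro M ⟨c, hc⟩
  ext k
  rw [rowSumDiff_apply, hc, hc, sub_self, Pi.zero_apply]

variable [Fintype ι] [DecidableEq ι]

lemma sum_adjMatrix_starGraph_apply (i k : ι) :
    ∑ j, (SimpleGraph.starGraph i).adjMatrix R k j =
      1 + Pi.single (M := fun _ ↦ R) i ((Fintype.card ι : R) - 2) k := by
  have hdegree := (SimpleGraph.starGraph i).adjMatrix_mulVec_const_apply (a := (1 : R)) (v := k)
  simp only [Matrix.mulVec, dotProduct, Function.const_apply, mul_one] at hdegree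
  rw [hdegree]
  rcases eq_or_ne k i with rfl | hki
  · rw [SimpleGraph.degree_starGraph_center, Nat.cast_pred (Fintype.card_pos_iff.2 ⟨k⟩),
      Pi.single_eq_same]
    ring
  · rw [SimpleGraph.degree_starGraph_of_ne_center hki, Pi.single_eq_of_ne hki, Nat.cast_one,
      add_zero]

lemma rowSumDiff_adjMatrix_starGraph {i z : ι} (hiz : i ≠ z) :
    rowSumDiff z ((SimpleGraph.starGraph i).adjMatrix R) =
      Pi.single i ((Fintype.card ι : R) - 2) := by
  ext k
  rw [rowSumDiff_apply, sum_adjMatrix_starGraph_apply, sum_adjMatrix_starGraph_apply,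
    Pi.single_eq_of_ne hiz.symm, add_zero, add_sub_cancel_left]

theorem stmt1_general [IsDomain R] (hcard : (Fintype.card ι : R) ≠ 2) (z : ι) :
    Disjoint (Submodule.span R {M : Matrix ι ι R | ∃ c, ∀ k, ∑ j, M k j = c})
      (Submodule.span R ((fun i ↦ (SimpleGraph.starGraph i).adjMatrix R) '' {z}ᶜ)) := by
  let star (i : ({z}ᶜ : Set ι)) : Matrix ι ι R := (SimpleGraph.starGraph i.1).adjMatrix R
  have hstar : rowSumDiff z ∘ star = fun i ↦ Pi.single i.1 ((Fintype.card ι : R) - 2) :=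
    funext fun i ↦ rowSumDiff_adjMatrix_starGraph i.2
  have hindep : LinearIndependent R (rowSumDiff z ∘ star) := by
    rw [hstar]
    exact (Pi.linearIndependent_single_of_ne_zero fun _ ↦ sub_ne_zero.2 hcard).comp
      Subtype.val Subtype.val_injective
  rw [Set.image_eq_range]
  exact (Submodule.range_ker_disjoint hindep).symm.mono_left
    (span_constant_row_sum_le_ker_rowSumDiff z)

end RowSums

lemma adjR_eq_adjMatrix_starGraph {n : ℕ} (i : Fin n) :
    adjR i = (SimpleGraph.starGraph i).adjMatrix ℝ := by
  ext k l
  simp only [adjR, Matrix.of_apply, SimpleGraph.adjMatrix_apply, SimpleGraph.starGraph_adj,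
    eq_comm (a := i)]

theorem stmt1 (n : ℕ) (hn : 4 ≤ n) (he : Even n) :
    Submodule.span ℝ {S : Matrix (Fin n) (Fin n) ℝ | IsPairing S} ⊓
      Submodule.span ℝ (adjR '' {i : Fin n | (i : ℕ) < n - 1}) = ⊥ := by
  have hcard : (Fintype.card (Fin n) : ℝ) ≠ 2 := by
    rw [Fintype.card_fin]
    exact_mod_cast (by omega : n ≠ 2)
  refine ((stmt1_general hcard ⟨n - 1, by omega⟩).mono (Submodule.span_mono ?_)
    (Submodule.span_mono ?_)).eq_bot
  · exact fun S hS ↦ ⟨1, hS.2.2.2⟩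
  · rw [funext adjR_eq_adjMatrix_starGraph]
    exact Set.image_mono fun i hi ↦ Fin.ne_of_lt hi
end

section
/- Let n be an even integer with n ≥ 4 and let A, B ∈ Ω_n. Then A = B if and only if ⟨S,A⟩ = ⟨S,B⟩ for every pairing matrix S ∈ 𝕊(n) and ⟨R_i,A⟩ = ⟨R_i,B⟩ for every 1 ≤ i ≤ n. -/
open Finset

/-!
Let `C = A - B`, whose pairing sums and row sums all vanish. Comparing two pairings that agree
except that one contains `{a, b}`, `{c, d}` and the other `{a, c}`, `{b, d}` gives
`C a b + C c d = C a c + C b d` for distinct `a`, `b`, `c`, `d`. Summing this over `d` and using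
that rows `b` and `c` have the same sum gives `C a b = C a c`, so each row of `C` is constant off
the diagonal; its sum being zero, it vanishes.
-/

section Pairings

variable {V : Type*}

/-- A partition of `V` into pairs, encoded as the map sending each point to its partner.
Pairing matrices are the permutation matrices of such maps. -/
structure IsPairingMap (σ : V → V) : Prop where
  involutive : Function.Involutive σ
  apply_ne : ∀ i, σ i ≠ i

lemma exists_isPairingMap [Fintype V] (hV : Even (Fintype.card V)) :
    ∃ σ : V → V, IsPairingMap σ := by
  obtain ⟨m, hm⟩ := hV
  have e : V ≃ Fin m × Bool := Fintype.equivOfCardEq (by simp [hm, mul_two])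
  refine ⟨fun i ↦ e.symm ((e i).1, !(e i).2), fun i ↦ by simp, fun i ↦ ?_⟩
  simp [Equiv.symm_apply_eq, Prod.ext_iff]

section Switch

variable [DecidableEq V] {σ : V → V} {a b i : V}

/-- The modification of the pairing `σ` in which `a` is paired with `b`, and the former partners
of `a` and `b` with each other: the conjugate of `σ` by the transposition of `σ a` and `b`. -/
def switch (σ : V → V) (a b : V) : V → V :=
  Equiv.swap (σ a) b ∘ σ ∘ Equiv.swap (σ a) b

lemma isPairingMap_switch (hσ : IsPairingMap σ) (a b : V) : IsPairingMap (switch σ a b) where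
  involutive i := by simp [switch, hσ.involutive _]
  apply_ne i := by
    simpa [switch, Equiv.swap_apply_eq_iff] using hσ.apply_ne (Equiv.swap (σ a) b i)

lemma switch_apply_left (hσ : IsPairingMap σ) (hab : a ≠ b) : switch σ a b a = b := by
  simp [switch, Equiv.swap_apply_of_ne_of_ne (hσ.apply_ne a).symm hab]

lemma switch_apply_right (hσ : IsPairingMap σ) (hab : a ≠ b) : switch σ a b b = a := by
  simpa only [switch_apply_left hσ hab] using (isPairingMap_switch hσ a b).involutive a

lemma switch_apply_partner_left (hσ : IsPairingMap σ) (hab : a ≠ b) :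
    switch σ a b (σ a) = σ b := by
  simp [switch,
    Equiv.swap_apply_of_ne_of_ne (hσ.involutive.injective.ne hab.symm) (hσ.apply_ne b)]

lemma switch_apply_partner_right (hσ : IsPairingMap σ) (hab : a ≠ b) :
    switch σ a b (σ b) = σ a := by
  simpa only [switch_apply_partner_left hσ hab] using (isPairingMap_switch hσ a b).involutive (σ a)

lemma switch_apply_of_ne (hσ : IsPairingMap σ) (hia : i ≠ a) (hib : i ≠ b) (hia' : i ≠ σ a)
    (hib' : i ≠ σ b) : switch σ a b i = σ i := by
  have hσib : σ i ≠ b := fun h ↦ hib' (by rw [← h, hσ.involutive i])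
  simp only [switch, Function.comp_apply, Equiv.swap_apply_of_ne_of_ne hia' hib,
    Equiv.swap_apply_of_ne_of_ne (hσ.involutive.injective.ne hia) hσib]

lemma sum_apply_switch_sub_sum_apply [Fintype V] {M : Type*} [AddCommGroup M] {C : Matrix V V M}
    (hC : C.IsSymm) (hσ : IsPairingMap σ) (hab : a ≠ b) (hb : b ≠ σ a) :
    ∑ i, C i (switch σ a b i) - ∑ i, C i (σ i) =
      2 • (C a b + C (σ a) (σ b) - (C a (σ a) + C b (σ b))) := by
  have ha : a ≠ σ b := fun h ↦ hb (by rw [h, hσ.involutive b])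
  have hsupp : ∀ i ∉ ({a, b, σ a, σ b} : Finset V), C i (switch σ a b i) - C i (σ i) = 0 := by
    intro i hi
    simp only [mem_insert, mem_singleton, not_or] at hi
    rw [switch_apply_of_ne hσ hi.1 hi.2.1 hi.2.2.1 hi.2.2.2, sub_self]
  rw [← sum_sub_distrib, ← sum_subset (subset_univ _) fun i _ ↦ hsupp i,
    sum_insert (by simp [hab, (hσ.apply_ne a).symm, ha]),
    sum_insert (by simp [hb, (hσ.apply_ne b).symm]),
    sum_pair (hσ.involutive.injective.ne hab),
    switch_apply_left hσ hab, switch_apply_right hσ hab, switch_apply_partner_left hσ hab,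
    switch_apply_partner_right hσ hab, hσ.involutive a, hσ.involutive b,
    hC.apply a b, hC.apply a (σ a), hC.apply b (σ b), hC.apply (σ a) (σ b)]
  abel

end Switch

/-- The linear relations that a symmetric matrix satisfies when its pairing sums do not change
under switching the pairs `{a, b}`, `{c, d}` to `{a, c}`, `{b, d}`. -/
def SwitchInvariant {M : Type*} [Add M] (C : Matrix V V M) : Prop :=
  ∀ ⦃a b c d : V⦄, a ≠ b → a ≠ c → a ≠ d → b ≠ c → b ≠ d → c ≠ d →
    C a b + C c d = C a c + C b d

variable [Fintype V] {a b c d : V}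

lemma exists_isPairingMap_apply_eq_apply_eq (hV : Even (Fintype.card V)) (hab : a ≠ b)
    (hac : a ≠ c) (had : a ≠ d) (hbc : b ≠ c) (hbd : b ≠ d) (hcd : c ≠ d) :
    ∃ σ : V → V, IsPairingMap σ ∧ σ a = b ∧ σ c = d := by
  classical
  obtain ⟨ρ, hρ⟩ := exists_isPairingMap hV
  have hτ : IsPairingMap (switch ρ a b) := isPairingMap_switch hρ a b
  have hτa : switch ρ a b a = b := switch_apply_left hρ hab
  have ne_partner {i : V} (hbi : b ≠ i) : a ≠ switch ρ a b i := fun h ↦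
    hbi (hτa.symm.trans (hτ.involutive.eq_iff.2 h))
  exact ⟨switch (switch ρ a b) c d, isPairingMap_switch hτ c d,
    (switch_apply_of_ne hτ hac had (ne_partner hbc) (ne_partner hbd)).trans hτa,
    switch_apply_left hτ hcd⟩

variable {M : Type*} [AddCommGroup M] [IsAddTorsionFree M] {C : Matrix V V M}

lemma switchInvariant_of_sum_apply_eq (hV : Even (Fintype.card V)) (hC : C.IsSymm) {s : M}
    (hs : ∀ σ : V → V, IsPairingMap σ → ∑ i, C i (σ i) = s) : SwitchInvariant C := by
  classical
  intro a b c d hab hac had hbc hbd hcd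
  obtain ⟨σ, hσ, rfl, rfl⟩ :=
    exists_isPairingMap_apply_eq_apply_eq hV hab hac had hbc hbd hcd
  have hswitch := sum_apply_switch_sub_sum_apply hC hσ hac hbc.symm
  rw [hs _ (isPairingMap_switch hσ a c), hs σ hσ, sub_self, eq_comm,
    nsmul_eq_zero_iff_right two_ne_zero, sub_eq_zero] at hswitch
  exact hswitch.symm

namespace SwitchInvariant

lemma apply_eq_apply (h : SwitchInvariant C) (hC : C.IsSymm) (hC₀ : ∀ i, C i i = 0)
    (hab : a ≠ b) (hac : a ≠ c) (hbc : b ≠ c) (hrow : ∑ j, C b j = ∑ j, C c j) :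
    C a b = C a c := by
  classical
  have hterm : ∀ d ∈ ({b, c}ᶜ : Finset V), C a b - C a c = C b d - C c d := by
    intro d hd
    obtain ⟨hdb, hdc⟩ : d ≠ b ∧ d ≠ c := by simpa using hd
    rw [sub_eq_sub_iff_add_eq_add, add_comm (C b d)]
    obtain rfl | hda := eq_or_ne d a
    · rw [hC.apply d c, hC.apply d b, add_comm]
    · exact h hab hac hda.symm hbc hdb.symm hdc.symm
  have hsum : ∑ d ∈ ({b, c}ᶜ : Finset V), (C b d - C c d) = 0 := by
    have hall : ∑ d, (C b d - C c d) = 0 := by rw [sum_sub_distrib, hrow, sub_self]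
    have hpair : ∑ d ∈ ({b, c} : Finset V), (C b d - C c d) = 0 := by
      rw [sum_pair hbc, hC₀, hC₀, hC.apply b c]
      abel
    rw [← sum_compl_add_sum {b, c}, hpair, add_zero] at hall
    exact hall
  rw [← sum_congr rfl hterm, sum_const, nsmul_eq_zero_iff_right, sub_eq_zero] at hsum
  · exact hsum
  · exact card_ne_zero_of_mem (a := a) (by simp [hab, hac])

lemma eq_zero (h : SwitchInvariant C) (hC : C.IsSymm) (hC₀ : ∀ i, C i i = 0)
    (hrow : ∀ i, ∑ j, C i j = 0) : C = 0 := by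
  classical
  ext a b
  obtain rfl | hab := eq_or_ne a b
  · exact hC₀ a
  have hconst : ∀ d ∈ univ.erase a, C a d = C a b := by
    intro d hd
    obtain rfl | hdb := eq_or_ne d b
    · rfl
    · exact h.apply_eq_apply hC hC₀ (ne_of_mem_erase hd).symm hab hdb
        ((hrow d).trans (hrow b).symm)
  have hsum := hrow a
  rw [← add_sum_erase univ _ (mem_univ a), hC₀, zero_add, sum_congr rfl hconst, sum_const] at hsum
  exact (nsmul_eq_zero_iff_right (card_ne_zero_of_mem (by simpa using hab.symm))).1 hsum

end SwitchInvariant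

end Pairings

theorem stmt4_general {V M : Type*} [Fintype V] [AddCommGroup M] [IsAddTorsionFree M]
    (hV : Even (Fintype.card V)) {A B : Matrix V V M} (hA : A.IsSymm) (hA₀ : ∀ i, A i i = 0)
    (hB : B.IsSymm) (hB₀ : ∀ i, B i i = 0) :
    A = B ↔ (∀ σ : V → V, IsPairingMap σ → ∑ i, A i (σ i) = ∑ i, B i (σ i)) ∧
      ∀ i, ∑ j, A i j = ∑ j, B i j := by
  refine ⟨by rintro rfl; simp, fun ⟨hpair, hrow⟩ ↦ sub_eq_zero.1 ?_⟩
  have hsymm : (A - B).IsSymm := hA.sub hB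
  have hswitch : SwitchInvariant (A - B) :=
    switchInvariant_of_sum_apply_eq hV hsymm (s := 0) fun σ hσ ↦ by simp [hpair σ hσ]
  exact hswitch.eq_zero hsymm (fun i ↦ by simp [hA₀, hB₀]) fun i ↦ by simp [hrow]

section PairingMatrices

variable {n : ℕ} {A B C S : Matrix (Fin n) (Fin n) ℝ} {σ : Fin n → Fin n}

/-- The 0-1 matrix with a one at each `(i, σ i)`; for a pairing map `σ` it is the pairing matrix
of `σ`. -/
def pairingMatrix (σ : Fin n → Fin n) : Matrix (Fin n) (Fin n) ℝ :=
  Matrix.of fun i j ↦ if σ i = j then 1 else 0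

lemma isPairing_pairingMatrix (hσ : IsPairingMap σ) : IsPairing (pairingMatrix σ) := by
  refine ⟨Matrix.IsSymm.ext fun i j ↦ ?_, fun i ↦ ?_, fun i j ↦ ?_, fun i ↦ ?_⟩
  · simp only [pairingMatrix, Matrix.of_apply, hσ.involutive.eq_iff, eq_comm (a := i)]
  · simp [pairingMatrix, hσ.apply_ne i]
  · simp [pairingMatrix, em']
  · simp [pairingMatrix]

lemma IsPairing.exists_pairingMatrix_eq (hS : IsPairing S) :
    ∃ σ, IsPairingMap σ ∧ pairingMatrix σ = S := by
  obtain ⟨hsymm, hdiag, h01, hrow⟩ := hS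
  have hone : ∀ i, ∃ j, S i j = 1 := by
    intro i
    by_contra! hne
    simpa [fun j ↦ (h01 i j).resolve_right (hne j)] using hrow i
  choose σ hσ using hone
  have huniq : ∀ {i j}, S i j = 1 → σ i = j := by
    intro i j hij
    by_contra hne
    have hle := add_le_sum (fun k _ ↦ (h01 i k).elim (·.ge) (· ▸ zero_le_one))
      (mem_univ (σ i)) (mem_univ j) hne
    rw [hσ, hij, hrow] at hle
    norm_num at hle
  refine ⟨σ, ⟨fun i ↦ huniq ((hsymm.apply i (σ i)).trans (hσ i)), fun i hi ↦ ?_⟩, ?_⟩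
  · simpa [hi, hdiag] using hσ i
  · ext i j
    by_cases hij : σ i = j
    · simp [pairingMatrix, hij, ← hσ i]
    · simp [pairingMatrix, hij, (h01 i j).resolve_right (mt huniq hij)]

lemma innerH_pairingMatrix (σ : Fin n → Fin n) (C : Matrix (Fin n) (Fin n) ℝ) :
    innerH (pairingMatrix σ) C = 1 / 2 * ∑ i, C i (σ i) := by
  simp [innerH, pairingMatrix]

lemma forall_isPairing_innerH_eq_iff :
    (∀ S, IsPairing S → innerH S A = innerH S B) ↔
      ∀ σ : Fin n → Fin n, IsPairingMap σ → ∑ i, A i (σ i) = ∑ i, B i (σ i) := by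
  constructor
  · intro h σ hσ
    simpa [innerH_pairingMatrix] using h _ (isPairing_pairingMatrix hσ)
  · intro h S hS
    obtain ⟨σ, hσ, rfl⟩ := hS.exists_pairingMatrix_eq
    rw [innerH_pairingMatrix, innerH_pairingMatrix, h σ hσ]

lemma innerH_adjR (hC : hollowSym C) (i : Fin n) : innerH (adjR i) C = ∑ j, C i j := by
  have hentry : ∀ k l, adjR i k l * C k l =
      (if i = k then C k l else 0) + (if i = l then C k l else 0) := by
    intro k l
    obtain rfl | hkl := eq_or_ne k l
    · simp [hC.2]
    · simp only [adjR, Matrix.of_apply]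
      grind
  have hrow : ∑ k, ∑ l, (if i = k then C k l else 0) = ∑ j, C i j := by
    simp [sum_ite_irrel]
  have hcol : ∑ k, ∑ l, (if i = l then C k l else 0) = ∑ j, C i j := by
    simp [hC.1.apply]
  simp only [innerH, hentry, sum_add_distrib, hrow, hcol]
  ring

end PairingMatrices

theorem stmt4 (n : ℕ) (hn : 4 ≤ n) (he : Even n) (A B : Matrix (Fin n) (Fin n) ℝ)
    (hA : hollowSym A) (hB : hollowSym B) :
    A = B ↔ ((∀ S, IsPairing S → innerH S A = innerH S B) ∧
      ∀ i : Fin n, innerH (adjR i) A = innerH (adjR i) B) := by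
  simpa only [forall_isPairing_innerH_eq_iff, innerH_adjR hA, innerH_adjR hB] using
    stmt4_general (by simpa using he) hA.1 hA.2 hB.1 hB.2
end

section
/- Let n be an even integer with n ≥ 4 and let C ∈ Ω_n. Define C̃ ∈ Ω_n by C̃_{i,j} = 0 if 1 ∈ {i,j}, and C̃_{i,j} = C_{i,j} − C_{1,i} − C_{1,j} + (2/(n−2))·Σ_{k=2}^n C_{1,k} otherwise (for i ≠ j; C̃_{i,i} = 0). Then C̃ ~ C, i.e., ⟨S,C̃⟩ = ⟨S,C⟩ for every pairing matrix S ∈ 𝕊(n). -/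
open Finset

/-!
If `S` has zero diagonal and all its row and column sums equal `r`, then adding `u i + v j` to every
off-diagonal entry of `C` changes `∑ i, ∑ j, S i j * C i j` by `r * (∑ i, u i + ∑ j, v j)`.
Row and column `z` of `C` can be cleared by such a change, and one degree of freedom is left: a
constant can be moved between the potentials at `z` and those elsewhere. Doing so changes the total
of the potentials by a multiple of `n - 2`, where `n` is the size of `C`, so for `n ≠ 2` it can be
chosen to make this total vanish. The resulting constant is the one added in the reduction.
-/

section LineSums

variable {ι R : Type*} [Fintype ι]

theorem sum_sum_mul_congr_of_diag_eq_zero [NonUnitalNonAssocSemiring R] {S A B : Matrix ι ι R}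
    (hdiag : ∀ i, S i i = 0) (hAB : ∀ i j, i ≠ j → A i j = B i j) :
    ∑ i, ∑ j, S i j * A i j = ∑ i, ∑ j, S i j * B i j := by
  refine sum_congr rfl fun i _ => sum_congr rfl fun j _ => ?_
  obtain rfl | hij := eq_or_ne i j
  · rw [hdiag, zero_mul, zero_mul]
  · rw [hAB i j hij]

theorem sum_sum_mul_add_of_lineSums [NonUnitalNonAssocSemiring R] {S : Matrix ι ι R} {r : R}
    (hrow : ∀ i, ∑ j, S i j = r) (hcol : ∀ j, ∑ i, S i j = r) (u v : ι → R) :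
    ∑ i, ∑ j, S i j * (u i + v j) = r * (∑ i, u i + ∑ j, v j) := by
  have hu : ∑ i, ∑ j, S i j * u i = r * ∑ i, u i := by
    simp only [← sum_mul, hrow, ← mul_sum]
  have hv : ∑ i, ∑ j, S i j * v j = r * ∑ j, v j := by
    rw [sum_comm]
    simp only [← sum_mul, hcol, ← mul_sum]
  simp only [mul_add, sum_add_distrib, hu, hv]

theorem sum_sum_mul_eq_of_lineSums_of_potentials [NonUnitalNonAssocSemiring R]
    {S A B : Matrix ι ι R} {r : R} {u v : ι → R} (hdiag : ∀ i, S i i = 0)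
    (hrow : ∀ i, ∑ j, S i j = r) (hcol : ∀ j, ∑ i, S i j = r)
    (hAB : ∀ i j, i ≠ j → A i j = B i j + (u i + v j)) (huv : ∑ i, u i + ∑ j, v j = 0) :
    ∑ i, ∑ j, S i j * A i j = ∑ i, ∑ j, S i j * B i j :=
  calc ∑ i, ∑ j, S i j * A i j
      = ∑ i, ∑ j, S i j * (B i j + (u i + v j)) :=
        sum_sum_mul_congr_of_diag_eq_zero (B := fun i j => B i j + (u i + v j)) hdiag hAB
    _ = ∑ i, ∑ j, S i j * B i j + ∑ i, ∑ j, S i j * (u i + v j) := by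
        simp only [mul_add, sum_add_distrib]
    _ = ∑ i, ∑ j, S i j * B i j := by
        rw [sum_sum_mul_add_of_lineSums hrow hcol, huv, mul_zero, add_zero]

end LineSums

section Reduction

variable {ι K : Type*} [Fintype ι] [DecidableEq ι] [Field K]

/-- The constant that the reduction of `C` at `z` adds to the entries outside row and column `z`.
The matrix `C` need not be symmetric, so row and column `z` both contribute. The
value is the junk `0` when the cardinality of `ι` is `2` in `K`. -/
def reductionConst (C : Matrix ι ι K) (z : ι) : K :=
  (∑ k with k ≠ z, (C k z + C z k)) / ((Fintype.card ι : K) - 2)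

/-- The reduction of `C` at `z`: the matrix with zero diagonal and zero row and column `z` whose
other off-diagonal entries come from `C` by subtracting the matching entries of row and column `z`
and adding the reduction constant. It is the matrix `C̃` of the theorem when `C` is symmetric. -/
def reduceAt (C : Matrix ι ι K) (z : ι) : Matrix ι ι K :=
  Matrix.of fun i j =>
    if i = z ∨ j = z ∨ i = j then 0 else C i j - C i z - C z j + reductionConst C z

/-- The row potentials of the reduction of `C` at `z`. Only their sums with `colPotential C z`
matter, so the whole reduction constant is put into the column potentials away from `z`. -/
def rowPotential (C : Matrix ι ι K) (z i : ι) : K :=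
  if i = z then -reductionConst C z else -C i z

/-- The column potentials of the reduction of `C` at `z`, normalised to vanish at `z`. -/
def colPotential (C : Matrix ι ι K) (z j : ι) : K :=
  if j = z then 0 else reductionConst C z - C z j

theorem reduceAt_apply_of_ne (C : Matrix ι ι K) (z : ι) {i j : ι} (hij : i ≠ j) :
    reduceAt C z i j = C i j + (rowPotential C z i + colPotential C z j) := by
  simp only [reduceAt, rowPotential, colPotential, Matrix.of_apply]
  grind

theorem sum_rowPotential (C : Matrix ι ι K) (z : ι) :
    ∑ i, rowPotential C z i = -reductionConst C z - ∑ k with k ≠ z, C k z := by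
  simp only [rowPotential, sum_ite, filter_eq', mem_univ, if_true, sum_singleton, sum_neg_distrib,
    sub_eq_add_neg]

theorem sum_colPotential (C : Matrix ι ι K) (z : ι) :
    ∑ j, colPotential C z j =
      ((Fintype.card ι : K) - 1) * reductionConst C z - ∑ k with k ≠ z, C z k := by
  have hcard : (#{k | k ≠ z} : K) = (Fintype.card ι : K) - 1 := by
    rw [filter_ne', cast_card_erase_of_mem (mem_univ z), card_univ]
  simp only [colPotential, sum_ite, sum_const_zero, zero_add, sum_sub_distrib, sum_const,
    nsmul_eq_mul, ← ne_eq, hcard]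

theorem sum_rowPotential_add_sum_colPotential (hι : (Fintype.card ι : K) ≠ 2)
    (C : Matrix ι ι K) (z : ι) :
    ∑ i, rowPotential C z i + ∑ j, colPotential C z j = 0 := by
  have hconst : reductionConst C z * ((Fintype.card ι : K) - 2) =
      ∑ k with k ≠ z, C k z + ∑ k with k ≠ z, C z k := by
    rw [reductionConst, div_mul_cancel₀ _ (sub_ne_zero.mpr hι), sum_add_distrib]
  rw [sum_rowPotential, sum_colPotential]
  linear_combination hconst

theorem reduceAt_eq_of_isSymm {C : Matrix ι ι K} (hC : C.IsSymm) (z : ι) :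
    reduceAt C z = Matrix.of fun i j =>
      if i = z ∨ j = z ∨ i = j then 0
      else C i j - C z i - C z j + 2 / ((Fintype.card ι : K) - 2) * ∑ k with k ≠ z, C z k := by
  have hconst : reductionConst C z =
      2 / ((Fintype.card ι : K) - 2) * ∑ k with k ≠ z, C z k := by
    simp only [reductionConst, hC.apply z, ← two_mul, ← mul_sum, mul_div_right_comm]
  simp only [reduceAt, hconst, hC.apply z]

theorem stmt15_general (hι : (Fintype.card ι : K) ≠ 2) {S : Matrix ι ι K} {r : K}
    (hdiag : ∀ i, S i i = 0) (hrow : ∀ i, ∑ j, S i j = r) (hcol : ∀ j, ∑ i, S i j = r)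
    (C : Matrix ι ι K) (z : ι) :
    ∑ i, ∑ j, S i j * reduceAt C z i j = ∑ i, ∑ j, S i j * C i j :=
  sum_sum_mul_eq_of_lineSums_of_potentials hdiag hrow hcol
    (fun _ _ => reduceAt_apply_of_ne C z) (sum_rowPotential_add_sum_colPotential hι C z)

end Reduction

theorem IsPairing.sum_col {n : ℕ} {S : Matrix (Fin n) (Fin n) ℝ} (hS : IsPairing S) (j : Fin n) :
    ∑ i, S i j = 1 := by
  obtain ⟨hsymm, -, -, hrow⟩ := hS
  simpa only [hsymm.apply j] using hrow j

theorem IsPairing.innerH_reduceAt {n : ℕ} (hn : (n : ℝ) ≠ 2) {S : Matrix (Fin n) (Fin n) ℝ}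
    (hS : IsPairing S) (C : Matrix (Fin n) (Fin n) ℝ) (z : Fin n) :
    innerH S (reduceAt C z) = innerH S C := by
  have hι : (Fintype.card (Fin n) : ℝ) ≠ 2 := by rwa [Fintype.card_fin]
  have ⟨_, hdiag, _, hrow⟩ := hS
  rw [innerH, innerH, stmt15_general hι hdiag hrow hS.sum_col]

theorem stmt15 (n : ℕ) (hn : 4 ≤ n) (he : Even n) (C : Matrix (Fin n) (Fin n) ℝ)
    (hC : hollowSym C) (Ct : Matrix (Fin n) (Fin n) ℝ)
    (hCt : Ct = Matrix.of fun i j =>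
      if i = (⟨0, by omega⟩ : Fin n) ∨ j = (⟨0, by omega⟩ : Fin n) ∨ i = j then 0
      else C i j - C ⟨0, by omega⟩ i - C ⟨0, by omega⟩ j
        + (2 / ((n : ℝ) - 2)) *
          ∑ k ∈ Finset.univ.filter (fun k => k ≠ (⟨0, by omega⟩ : Fin n)), C ⟨0, by omega⟩ k) :
    ∀ S, IsPairing S → innerH S Ct = innerH S C := by
  have hn2 : (n : ℝ) ≠ 2 := by exact_mod_cast (by omega : n ≠ 2)
  rw [hCt]
  simpa only [reduceAt_eq_of_isSymm hC.1, Fintype.card_fin] using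
    fun S (hS : IsPairing S) => hS.innerH_reduceAt hn2 C ⟨0, by omega⟩
end

section
/- Let n ≥ 3 be an integer and let C ∈ Ω_n. Define X ∈ Ω_n by X_{i,j} = (2(n−1)/(n−2))·μ_element(C) + C_{i,j} − (⟨R_i,C⟩ + ⟨R_j,C⟩)/(n−2) for i ≠ j (and X_{i,i} = 0). Then X has constant row sums: ⟨R_k,X⟩ = (n−1)·μ_element(C) for every 1 ≤ k ≤ n. -/
open Finset

/-! Write `r i` for the off-diagonal sum of row `i` of `C`, and `T` for the sum of all the `r i`.
Over the `n - 1` off-diagonal places of row `k`, the corrections `r k + r j` add up to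
`(n - 2) * r k + T`. After division by `n - 2` they cancel the contribution `r k` of `C` itself,
leaving a quantity independent of `k`. The constant `2 * (n - 1) / (n - 2) * muEl C` is the one that
makes it `(n - 1) * muEl C`, because `T = n * (n - 1) * muEl C`. -/

section OffDiagRowSum

variable {ι R K : Type*} [Fintype ι] [DecidableEq ι]

/-- The sum of the entries of row `i` of a square matrix other than the diagonal one. For symmetric
`C` this is the pairing `⟨R_i, C⟩` with the adjacent set matrix, whatever the diagonal of `C`. -/
def offDiagRowSum [AddCommMonoid R] (C : Matrix ι ι R) (i : ι) : R :=
  ∑ j ∈ {i}ᶜ, C i j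

theorem sum_compl_singleton_add [CommRing R] (r : ι → R) (k : ι) :
    ∑ j ∈ {k}ᶜ, (r k + r j) = ((Fintype.card ι : R) - 2) * r k + ∑ i, r i := by
  have hsum : ∑ j, (r k + r j) = Fintype.card ι * r k + ∑ i, r i := by
    rw [sum_add_distrib, sum_const, card_univ, nsmul_eq_mul]
  rw [Fintype.sum_eq_add_sum_compl k] at hsum
  linear_combination hsum

theorem offDiagRowSum_of_eq_add_sub_div [Field K] {C X : Matrix ι ι K} {a : K}
    (hcard : (Fintype.card ι : K) - 2 ≠ 0)
    (hX : ∀ i j, i ≠ j → X i j = a + C i j -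
      (offDiagRowSum C i + offDiagRowSum C j) / ((Fintype.card ι : K) - 2))
    (k : ι) :
    offDiagRowSum X k = ((Fintype.card ι : K) - 1) * a -
      (∑ i, offDiagRowSum C i) / ((Fintype.card ι : K) - 2) := by
  have hconst : ∑ _j ∈ ({k}ᶜ : Finset ι), a = ((Fintype.card ι : K) - 1) * a := by
    have : Nonempty ι := ⟨k⟩
    rw [sum_const, card_compl, card_singleton, nsmul_eq_mul, Nat.cast_pred Fintype.card_pos]
  calc offDiagRowSum X k
      = ∑ j ∈ {k}ᶜ, (a + C k j -
          (offDiagRowSum C k + offDiagRowSum C j) / ((Fintype.card ι : K) - 2)) :=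
        sum_congr rfl fun j hj => hX k j (by simpa [eq_comm] using hj)
    _ = ((Fintype.card ι : K) - 1) * a + offDiagRowSum C k -
          (((Fintype.card ι : K) - 2) * offDiagRowSum C k + ∑ i, offDiagRowSum C i) /
            ((Fintype.card ι : K) - 2) := by
        rw [sum_sub_distrib, sum_add_distrib, hconst, ← sum_div, sum_compl_singleton_add,
          offDiagRowSum]
    _ = ((Fintype.card ι : K) - 1) * a -
          (∑ i, offDiagRowSum C i) / ((Fintype.card ι : K) - 2) := by
        rw [add_div, mul_div_cancel_left₀ _ hcard]
        ring

end OffDiagRowSum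

section RealMatrix

variable {n : ℕ} {C X : Matrix (Fin n) (Fin n) ℝ}

theorem innerH_adjR_s17 (X : Matrix (Fin n) (Fin n) ℝ) (k : Fin n) :
    innerH (adjR k) X = (offDiagRowSum X k + offDiagRowSum X.transpose k) / 2 := by
  have hrow : ∑ j, adjR k k j * X k j = offDiagRowSum X k := by
    have hdiag : adjR k k k = 0 := by simp [adjR]
    have hoff (j : Fin n) (hj : j ∈ ({k}ᶜ : Finset (Fin n))) : adjR k k j = 1 := by
      simpa [adjR, eq_comm] using hj
    rw [Fintype.sum_eq_add_sum_compl k, hdiag, zero_mul, zero_add]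
    exact sum_congr rfl fun j hj => by rw [hoff j hj, one_mul]
  have hcol (i : Fin n) (hi : i ∈ ({k}ᶜ : Finset (Fin n))) :
      ∑ j, adjR k i j * X i j = X i k := by
    have hik : i ≠ k := by simpa using hi
    rw [Fintype.sum_eq_single k fun j hj => by simp [adjR, hik.symm, hj.symm]]
    simp [adjR, hik]
  rw [innerH, Fintype.sum_eq_add_sum_compl k, hrow, sum_congr rfl hcol, one_div_mul_eq_div]
  rfl

theorem innerH_adjR_of_isSymm (hX : X.IsSymm) (k : Fin n) :
    innerH (adjR k) X = offDiagRowSum X k := by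
  rw [innerH_adjR_s17, hX.eq, add_self_div_two]

theorem sum_offDiagRowSum (C : Matrix (Fin n) (Fin n) ℝ) :
    ∑ i, offDiagRowSum C i = pairSum C + pairSum C.transpose := by
  simp only [offDiagRowSum, pairSum, filter_lt_eq_Ioi, ← sum_add_distrib]
  exact (sum_sum_Ioi_add_eq_sum_sum_off_diag fun i j => C j i).symm

theorem sum_offDiagRowSum_eq_mul_muEl (hn : 2 ≤ n) (hC : C.IsSymm) :
    ∑ i, offDiagRowSum C i = n * ((n : ℝ) - 1) * muEl C := by
  have hn' : (2 : ℝ) ≤ n := by exact_mod_cast hn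
  have hn0 : (n : ℝ) ≠ 0 := by linarith
  have hn1 : (n : ℝ) - 1 ≠ 0 := by linarith
  rw [sum_offDiagRowSum, hC.eq, muEl]
  field_simp
  ring

end RealMatrix

theorem stmt17_general (n : ℕ) (hn : 3 ≤ n) (C : Matrix (Fin n) (Fin n) ℝ)
    (hC : C.IsSymm) (X : Matrix (Fin n) (Fin n) ℝ)
    (hX : ∀ i j, i ≠ j →
      X i j = (2 * ((n : ℝ) - 1) / ((n : ℝ) - 2)) * muEl C + C i j
        - (innerH (adjR i) C + innerH (adjR j) C) / ((n : ℝ) - 2)) :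
    ∀ k : Fin n, innerH (adjR k) X = ((n : ℝ) - 1) * muEl C := by
  intro k
  have hn' : (3 : ℝ) ≤ n := by exact_mod_cast hn
  have hn2 : (n : ℝ) - 2 ≠ 0 := by linarith
  have hXsymm : X.IsSymm := Matrix.IsSymm.ext fun i j => by
    rcases eq_or_ne i j with rfl | hij
    · rfl
    · rw [hX i j hij, hX j i hij.symm, hC.apply, add_comm (innerH _ _)]
  simp only [innerH_adjR_of_isSymm hC] at hX
  have hrow := offDiagRowSum_of_eq_add_sub_div (by rwa [Fintype.card_fin])
    (by simpa only [Fintype.card_fin] using hX) k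
  rw [Fintype.card_fin, sum_offDiagRowSum_eq_mul_muEl (by lia) hC] at hrow
  rw [innerH_adjR_of_isSymm hXsymm, hrow]
  field_simp
  ring

theorem stmt17 (n : ℕ) (hn : 3 ≤ n) (C : Matrix (Fin n) (Fin n) ℝ)
    (hC : hollowSym C) (X : Matrix (Fin n) (Fin n) ℝ)
    (hX : X = Matrix.of fun i j =>
      if i = j then 0
      else (2 * ((n : ℝ) - 1) / ((n : ℝ) - 2)) * muEl C + C i j
        - (innerH (adjR i) C + innerH (adjR j) C) / ((n : ℝ) - 2)) :
    ∀ k : Fin n, innerH (adjR k) X = ((n : ℝ) - 1) * muEl C :=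
  stmt17_general n hn C hC.1 X fun i j hij => by simp only [hX, Matrix.of_apply, if_neg hij]
end

section
/- Let n be an even integer with n ≥ 4 and let C ∈ Ω_n. Then there is exactly one matrix in the equivalence class of C with constant row sums; namely, if Y ∈ Ω_n satisfies Y ~ C and ⟨R_k,Y⟩ takes the same value for all 1 ≤ k ≤ n, then Y = X, where X ∈ Ω_n is defined by X_{i,j} = (2(n−1)/(n−2))·μ_element(C) + C_{i,j} − (⟨R_i,C⟩ + ⟨R_j,C⟩)/(n−2) for i ≠ j (and X_{i,i} = 0). -/
/-!
Put `D = Y - C`, a hollow symmetric matrix annihilated by every pairing, with row sums `rᵢ`.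
Exchanging `{i, j}, {k, l}` for `{i, k}, {j, l}` in a pairing gives
`Dᵢⱼ + Dₖₗ = Dᵢₖ + Dⱼₗ`; summing over `l` gives `(n - 2) (Dᵢⱼ - Dᵢₖ) = rⱼ - rₖ`, so that
`(n - 2) Dᵢⱼ - rᵢ - rⱼ` is the same number `c` for all `i ≠ j`. Summing this along a row and along
a pairing forces `c = 0` when `n ≠ 2`, whence `(n - 2) Dᵢⱼ = rᵢ + rⱼ` and `∑ rᵢ = 0`. If the row
sums of `Y` are constant, the last equation determines them, and the one before it then
determines `Y`.
-/

open Finset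

/-- The sum of the `i`-th row of a matrix. -/
def rowSum {ι R : Type*} [Fintype ι] [AddCommMonoid R] (A : Matrix ι ι R) (i : ι) : R :=
  ∑ j, A i j

theorem rowSum_sub {ι R : Type*} [Fintype ι] [AddCommGroup R] (A B : Matrix ι ι R) (i : ι) :
    rowSum (A - B) i = rowSum A i - rowSum B i :=
  sum_sub_distrib ..

/-- A fixed-point-free involution: the permutation whose matrix is a pairing matrix. -/
structure IsPairingPerm_s19 {ι : Type*} (σ : Equiv.Perm ι) : Prop where
  involutive : Function.Involutive σ
  apply_ne : ∀ i, σ i ≠ i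

/-- The relation `D ~ 0` for symmetric `D`, with the pairing matrices replaced by their
permutations and without the factor `1 / 2` of the inner product. -/
def VanishesOnPairings {ι R : Type*} [Fintype ι] [AddCommMonoid R] (D : Matrix ι ι R) : Prop :=
  ∀ σ : Equiv.Perm ι, IsPairingPerm_s19 σ → ∑ i, D i (σ i) = 0

namespace IsPairingPerm_s19

theorem permCongr {ι κ : Type*} {σ : Equiv.Perm ι} (hσ : IsPairingPerm_s19 σ) (e : ι ≃ κ) :
    IsPairingPerm_s19 (e.permCongr σ) where
  involutive x := by simp [Equiv.permCongr_apply, hσ.involutive _]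
  apply_ne x h := hσ.apply_ne (e.symm x) (e.injective (by simpa [Equiv.permCongr_apply] using h))

theorem revPerm {n : ℕ} (hn : Even n) : IsPairingPerm_s19 (Fin.revPerm : Equiv.Perm (Fin n)) where
  involutive := Fin.rev_involutive
  apply_ne i h := by
    have hval : n - (i + 1) = (i : ℕ) := by simpa [Fin.ext_iff, Fin.val_rev] using h
    obtain ⟨m, rfl⟩ := hn
    omega

section Existence

variable {ι : Type*} [Fintype ι]

theorem exists_of_even_card (hι : Even (Fintype.card ι)) :
    ∃ σ : Equiv.Perm ι, IsPairingPerm_s19 σ :=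
  ⟨_, (revPerm hι).permCongr (Fintype.equivFin ι).symm⟩

theorem exists_apply_eq_s19 (hι : Even (Fintype.card ι)) {i j : ι} (hij : i ≠ j) :
    ∃ σ : Equiv.Perm ι, IsPairingPerm_s19 σ ∧ σ i = j := by
  classical
  obtain ⟨σ, hσ⟩ := exists_of_even_card hι
  refine ⟨_, hσ.permCongr (Equiv.swap (σ i) j), ?_⟩
  rw [Equiv.permCongr_apply, Equiv.symm_swap,
    Equiv.swap_apply_of_ne_of_ne (hσ.apply_ne i).symm hij, Equiv.swap_apply_left]

theorem exists_apply_eq_and_apply_eq (hι : Even (Fintype.card ι)) {i j k l : ι} (hij : i ≠ j)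
    (hik : i ≠ k) (hil : i ≠ l) (hjk : j ≠ k) (hjl : j ≠ l) (hkl : k ≠ l) :
    ∃ σ : Equiv.Perm ι, IsPairingPerm_s19 σ ∧ σ i = j ∧ σ k = l := by
  classical
  obtain ⟨σ, hσ, hσi⟩ := exists_apply_eq_s19 hι hij
  have hσk_ne_i : σ k ≠ i := fun h => hjk (by rw [← hσi, ← h, hσ.involutive])
  have hσk_ne_j : σ k ≠ j := fun h => hik (σ.injective (hσi.trans h.symm))
  refine ⟨_, hσ.permCongr (Equiv.swap (σ k) l), ?_, ?_⟩
  · rw [Equiv.permCongr_apply, Equiv.symm_swap, Equiv.swap_apply_of_ne_of_ne hσk_ne_i.symm hil,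
      hσi, Equiv.swap_apply_of_ne_of_ne hσk_ne_j.symm hjl]
  · rw [Equiv.permCongr_apply, Equiv.symm_swap,
      Equiv.swap_apply_of_ne_of_ne (hσ.apply_ne k).symm hkl, Equiv.swap_apply_left]

end Existence

end IsPairingPerm_s19

namespace VanishesOnPairings

theorem sum_apply_apply_eq_zero {ι R : Type*} [Fintype ι] [AddCommMonoid R] {D : Matrix ι ι R}
    (hD : VanishesOnPairings D) {σ : Equiv.Perm ι} (hσ : IsPairingPerm_s19 σ) (e : Equiv.Perm ι) :
    ∑ i, D (e i) (e (σ i)) = 0 := by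
  rw [← hD _ (hσ.permCongr e), ← Equiv.sum_comp e (fun i => D i (e.permCongr σ i))]
  simp only [Equiv.permCongr_apply, Equiv.symm_apply_apply]

section CharZero

variable {ι K : Type*} [Fintype ι] [Field K] [CharZero K] {D : Matrix ι ι K}

theorem apply_add_apply_eq (hD : VanishesOnPairings D) (hι : Even (Fintype.card ι))
    (hsymm : D.IsSymm) {i j k l : ι} (hij : i ≠ j) (hik : i ≠ k) (hil : i ≠ l) (hjk : j ≠ k)
    (hjl : j ≠ l) (hkl : k ≠ l) : D i j + D k l = D i k + D j l := by
  classical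
  obtain ⟨σ, hσ, hσi, hσk⟩ :=
    IsPairingPerm_s19.exists_apply_eq_and_apply_eq hι hij hik hil hjk hjl hkl
  have hσj : σ j = i := by rw [← hσi, hσ.involutive]
  have hσl : σ l = k := by rw [← hσk, hσ.involutive]
  let s := Equiv.swap j k
  have hsi : s i = i := Equiv.swap_apply_of_ne_of_ne hij hik
  have hsj : s j = k := Equiv.swap_apply_left j k
  have hsk : s k = j := Equiv.swap_apply_right j k
  have hsl : s l = l := Equiv.swap_apply_of_ne_of_ne hjl.symm hkl.symm
  have hdiff : ∑ x, (D x (σ x) - D (s x) (s (σ x))) = 0 := by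
    rw [sum_sub_distrib, hD σ hσ, hD.sum_apply_apply_eq_zero hσ s, sub_zero]
  have hsupport : ∀ x ∈ univ, x ∉ ({i, j, k, l} : Finset ι) →
      D x (σ x) - D (s x) (s (σ x)) = 0 := by
    intro x _ hx
    simp only [mem_insert, mem_singleton, not_or] at hx
    obtain ⟨hxi, hxj, hxk, hxl⟩ := hx
    have hσx_ne_j : σ x ≠ j := fun h => hxi (σ.injective (h.trans hσi.symm))
    have hσx_ne_k : σ x ≠ k := fun h => hxl (σ.injective (h.trans hσl.symm))
    rw [show s x = x from Equiv.swap_apply_of_ne_of_ne hxj hxk,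
      show s (σ x) = σ x from Equiv.swap_apply_of_ne_of_ne hσx_ne_j hσx_ne_k, sub_self]
  rw [← sum_subset (subset_univ _) hsupport, sum_insert (by simp [*]), sum_insert (by simp [*]),
    sum_insert (by simp [*]), sum_singleton, hσi, hσj, hσk, hσl, hsi, hsj, hsk, hsl,
    hsymm.apply i j, hsymm.apply i k, hsymm.apply k l, hsymm.apply j l] at hdiff
  linear_combination (1 / 2) * hdiff

theorem card_sub_two_mul_sub (hD : VanishesOnPairings D) (hι : Even (Fintype.card ι))
    (hsymm : D.IsSymm) (hdiag : ∀ i, D i i = 0) {i j k : ι} (hij : i ≠ j) (hik : i ≠ k)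
    (hjk : j ≠ k) :
    ((Fintype.card ι : K) - 2) * (D i j - D i k) = rowSum D j - rowSum D k := by
  classical
  have hsupport : ∀ x ∈ univ, x ∉ ({i, j, k} : Finset ι) →
      D i j + D k x - (D i k + D j x) = 0 := by
    intro x _ hx
    simp only [mem_insert, mem_singleton, not_or] at hx
    obtain ⟨hxi, hxj, hxk⟩ := hx
    exact sub_eq_zero.mpr (hD.apply_add_apply_eq hι hsymm hij hik (Ne.symm hxi) hjk
      (Ne.symm hxj) (Ne.symm hxk))
  have hsum := sum_subset (subset_univ _) hsupport
  rw [sum_insert (by simp [*]), sum_insert (by simp [*]), sum_singleton, hdiag j, hdiag k,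
    hsymm.apply i j, hsymm.apply i k, hsymm.apply j k] at hsum
  simp only [sum_sub_distrib, sum_add_distrib, sum_const, card_univ, nsmul_eq_mul] at hsum
  unfold rowSum
  linear_combination -hsum

theorem exists_card_sub_two_mul_apply_eq_add (hD : VanishesOnPairings D)
    (hι : Even (Fintype.card ι)) (hsymm : D.IsSymm) (hdiag : ∀ i, D i i = 0) :
    ∃ c, ∀ i j, i ≠ j →
      ((Fintype.card ι : K) - 2) * D i j = rowSum D i + rowSum D j + c := by
  let e i j := ((Fintype.card ι : K) - 2) * D i j - rowSum D i - rowSum D j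
  have he_symm : ∀ i j, e i j = e j i := fun i j => by
    simp only [e, hsymm.apply i j]
    ring
  have he_right : ∀ {i j k}, i ≠ j → i ≠ k → e i j = e i k := by
    intro i j k hij hik
    obtain rfl | hjk := eq_or_ne j k
    · rfl
    · linear_combination hD.card_sub_two_mul_sub hι hsymm hdiag hij hik hjk
  have he_const : ∀ {i j k l}, i ≠ j → k ≠ l → e i j = e k l := by
    intro i j k l hij hkl
    obtain rfl | hik := eq_or_ne i k
    · exact he_right hij hkl
    · rw [he_right hij hik, he_symm, he_right hik.symm hkl]
  by_cases hne : ∃ i j : ι, i ≠ j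
  · obtain ⟨p, q, hpq⟩ := hne
    exact ⟨e p q, fun i j hij => by linear_combination he_const hij hpq⟩
  · exact ⟨0, fun i j hij => (hne ⟨i, j, hij⟩).elim⟩

theorem card_sub_two_mul_apply (hD : VanishesOnPairings D) (hι : Even (Fintype.card ι))
    (hι_ne : Fintype.card ι ≠ 2) (hsymm : D.IsSymm) (hdiag : ∀ i, D i i = 0) {i j : ι}
    (hij : i ≠ j) : ((Fintype.card ι : K) - 2) * D i j = rowSum D i + rowSum D j := by
  classical
  obtain ⟨c, hc⟩ := hD.exists_card_sub_two_mul_apply_eq_add hι hsymm hdiag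
  have hrow : -∑ k, rowSum D k = ((Fintype.card ι : K) - 1) * c := by
    have h := sum_congr rfl fun k (hk : k ∈ univ.erase i) =>
      hc i k (ne_of_mem_erase hk).symm
    rw [← mul_sum, sum_erase_eq_sub (mem_univ i), sum_erase_eq_sub (mem_univ i), hdiag i,
      ← rowSum] at h
    simp only [sum_add_distrib, sum_const, card_univ, nsmul_eq_mul] at h
    linear_combination h
  have hpairing : -(2 * ∑ k, rowSum D k) = Fintype.card ι * c := by
    obtain ⟨σ, hσ⟩ := IsPairingPerm_s19.exists_of_even_card hι
    have h := sum_congr rfl fun k (_ : k ∈ univ) => hc k (σ k) (hσ.apply_ne k).symm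
    rw [← mul_sum, hD σ hσ, sum_add_distrib, sum_add_distrib, Equiv.sum_comp σ (rowSum D)] at h
    simp only [sum_const, card_univ, nsmul_eq_mul] at h
    linear_combination h
  have hcard : (Fintype.card ι : K) - 2 ≠ 0 := sub_ne_zero.mpr (mod_cast hι_ne)
  have hc_zero : c = 0 :=
    (mul_eq_zero.mp (show ((Fintype.card ι : K) - 2) * c = 0 by
      linear_combination hpairing - 2 * hrow)).resolve_left hcard
  rw [hc i j hij, hc_zero, add_zero]

theorem sum_rowSum_eq_zero (hD : VanishesOnPairings D) (hι : Even (Fintype.card ι))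
    (hι_ne : Fintype.card ι ≠ 2) (hsymm : D.IsSymm) (hdiag : ∀ i, D i i = 0) :
    ∑ i, rowSum D i = 0 := by
  obtain ⟨σ, hσ⟩ := IsPairingPerm_s19.exists_of_even_card hι
  have h := sum_congr rfl fun k (_ : k ∈ univ) =>
    hD.card_sub_two_mul_apply hι hι_ne hsymm hdiag (hσ.apply_ne k).symm
  rw [← mul_sum, hD σ hσ, sum_add_distrib, Equiv.sum_comp σ (rowSum D)] at h
  linear_combination -(1 / 2) * h

end CharZero

end VanishesOnPairings

section PairingMatrices

variable {n : ℕ}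

theorem hollowSym.sub {A B : Matrix (Fin n) (Fin n) ℝ} (hA : hollowSym A) (hB : hollowSym B) :
    hollowSym (A - B) :=
  ⟨hA.1.sub hB.1, fun i => by rw [Matrix.sub_apply, hA.2, hB.2, sub_zero]⟩

theorem IsPairingPerm_s19.isPairing_permMatrix {σ : Equiv.Perm (Fin n)} (hσ : IsPairingPerm_s19 σ) :
    IsPairing (σ.permMatrix ℝ) := by
  refine ⟨?_, fun i => ?_, fun i j => ?_, fun i => ?_⟩
  · rw [Matrix.IsSymm, Matrix.transpose_permMatrix,
      show σ⁻¹ = σ from Function.Involutive.symm_eq_self_of_involutive σ hσ.involutive]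
  · simp [hσ.apply_ne i]
  · simp only [PEquiv.toMatrix_toPEquiv_apply, Pi.single_apply]
    exact (ite_eq_or_eq _ _ _).symm
  · simp

theorem innerH_permMatrix (σ : Equiv.Perm (Fin n)) (A : Matrix (Fin n) (Fin n) ℝ) :
    innerH (σ.permMatrix ℝ) A = 1 / 2 * ∑ i, A i (σ i) := by
  simp [innerH]

theorem vanishesOnPairings_sub {A B : Matrix (Fin n) (Fin n) ℝ}
    (hAB : ∀ S, IsPairing S → innerH S A = innerH S B) : VanishesOnPairings (A - B) := by
  intro σ hσ
  have h := hAB _ hσ.isPairing_permMatrix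
  rw [innerH_permMatrix, innerH_permMatrix] at h
  simp only [Matrix.sub_apply, sum_sub_distrib]
  linear_combination 2 * h

theorem innerH_adjR_s19 {A : Matrix (Fin n) (Fin n) ℝ} (hA : hollowSym A) (i : Fin n) :
    innerH (adjR i) A = rowSum A i := by
  have hentry : ∀ k l, adjR i k l * A k l
      = (if i = k then A k l else 0) + (if i = l then A l k else 0) := by
    intro k l
    obtain rfl | hkl := eq_or_ne k l
    · simp [hA.2]
    · rw [hA.1.apply k l]
      by_cases hik : i = k <;> by_cases hil : i = l <;> simp_all [adjR]
  simp only [innerH, hentry, sum_add_distrib]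
  rw [sum_comm (f := fun k l => if i = k then A k l else 0)]
  simp only [sum_ite_eq, mem_univ, if_true, rowSum]
  ring

theorem sum_rowSum_eq_two_mul_pairSum {A : Matrix (Fin n) (Fin n) ℝ} (hA : hollowSym A) :
    ∑ i, rowSum A i = 2 * pairSum A := by
  calc ∑ i, rowSum A i = ∑ i, ∑ j ∈ {i}ᶜ, A j i := by
        refine sum_congr rfl fun i _ => ?_
        rw [rowSum, Fintype.sum_eq_add_sum_compl i, hA.2, zero_add]
        exact sum_congr rfl fun j _ => hA.1.apply j i
    _ = ∑ i, ∑ j ∈ Ioi i, (A j i + A i j) := (sum_sum_Ioi_add_eq_sum_sum_off_diag A).symm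
    _ = 2 * pairSum A := by
        simp only [pairSum, filter_lt_eq_Ioi, mul_sum, two_mul]
        exact sum_congr rfl fun i _ => sum_congr rfl fun j _ => by rw [hA.1.apply i j]

theorem sum_rowSum_eq_mul_muEl (hn : 1 < n) {A : Matrix (Fin n) (Fin n) ℝ} (hA : hollowSym A) :
    ∑ i, rowSum A i = n * ((n - 1) * muEl A) := by
  have hn_real : (1 : ℝ) < n := mod_cast hn
  have hn_pred : (n : ℝ) - 1 ≠ 0 := (sub_pos.mpr hn_real).ne'
  rw [sum_rowSum_eq_two_mul_pairSum hA, muEl]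
  field_simp

end PairingMatrices

theorem stmt19 (n : ℕ) (hn : 4 ≤ n) (he : Even n) (C : Matrix (Fin n) (Fin n) ℝ)
    (hC : hollowSym C) (X : Matrix (Fin n) (Fin n) ℝ)
    (hX : X = Matrix.of fun i j =>
      if i = j then 0
      else (2 * ((n : ℝ) - 1) / ((n : ℝ) - 2)) * muEl C + C i j
        - (innerH (adjR i) C + innerH (adjR j) C) / ((n : ℝ) - 2))
    (Y : Matrix (Fin n) (Fin n) ℝ) (hY : hollowSym Y)
    (hsim : ∀ S, IsPairing S → innerH S Y = innerH S C)
    (hconst : ∀ k l : Fin n, innerH (adjR k) Y = innerH (adjR l) Y) :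
    Y = X := by
  have hn_zero : (n : ℝ) ≠ 0 := mod_cast (by omega : n ≠ 0)
  have hn_two : (n : ℝ) - 2 ≠ 0 := sub_ne_zero.mpr (mod_cast (by omega : n ≠ 2))
  have hcard : Even (Fintype.card (Fin n)) := by rwa [Fintype.card_fin]
  have hcard_ne : Fintype.card (Fin n) ≠ 2 := by rw [Fintype.card_fin]; omega
  have hD : VanishesOnPairings (Y - C) := vanishesOnPairings_sub hsim
  obtain ⟨hsymm, hdiag⟩ := hY.sub hC
  simp only [innerH_adjR_s19 hY] at hconst
  have hrow : ∀ i, rowSum Y i = (n - 1) * muEl C := fun i => by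
    have h := hD.sum_rowSum_eq_zero hcard hcard_ne hsymm hdiag
    simp only [rowSum_sub, sum_sub_distrib, sum_rowSum_eq_mul_muEl (by omega) hC, hconst _ i,
      sum_const, card_univ, Fintype.card_fin, nsmul_eq_mul, ← mul_sub] at h
    exact sub_eq_zero.mp ((mul_eq_zero.mp h).resolve_left hn_zero)
  ext i j
  rw [hX, Matrix.of_apply]
  split_ifs with hij
  · rw [← hij, hY.2]
  have h := hD.card_sub_two_mul_apply hcard hcard_ne hsymm hdiag hij
  rw [rowSum_sub, rowSum_sub, hrow, hrow, Fintype.card_fin, Matrix.sub_apply] at h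
  rw [innerH_adjR_s19 hC, innerH_adjR_s19 hC]
  field_simp
  linear_combination h
end
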